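/- Let d ≥ 1, t ≥ 0, n ∈ ℤ/dℤ, let v ∈ ℂ⁴ be a unit coin vector, and let Q = diag(1,1,1,−1) on the coin registers. Then the following identities hold: p(n,t,0;|0⟩⊗v) = p(n,t,6;|0⟩⊗Qv), p(n,t,2;|0⟩⊗v) = p(n,t,4;|0⟩⊗Qv), and p(n,t,1;|0⟩⊗v) = p(n,t,5;|0⟩⊗Qv). -/

import Mathlib

open scoped Classical
open Complex Matrix Finset Filter

noncomputable section

/-- The 2×2 coin matrix `C(θ)`. -/
def Cmat (θ : ℝ) : Matrix (Fin 2) (Fin 2) ℂ :=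
  !![(Real.cos θ : ℂ), (Real.sin θ : ℂ); (Real.sin θ : ℂ), -(Real.cos θ : ℂ)]

/-- Encode a pair of coin states into `Fin 4` (ordered basis `|↓↓⟩,|↓↑⟩,|↑↓⟩,|↑↑⟩`). -/
def enc (c₁ c₂ : Fin 2) : Fin 4 := ⟨2 * c₁.val + c₂.val, by omega⟩

/-- First coin register of a combined index. -/
def dec₁ (i : Fin 4) : Fin 2 := ⟨i.val / 2, by omega⟩

/-- Second (active) coin register of a combined index. -/
def dec₂ (i : Fin 4) : Fin 2 := ⟨i.val % 2, by omega⟩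

/-- Coin flip operator `Ĉ(φ) = |↓⟩⟨↓|⊗C(π/4) + |↑⟩⟨↑|⊗C((π/4)(1+φ))` as a 4×4 matrix. -/
def Chat (φ : ℝ) : Matrix (Fin 4) (Fin 4) ℂ :=
  Matrix.of fun i j =>
    if dec₁ i = dec₁ j then
      (if dec₁ i = 0 then Cmat (Real.pi / 4) else Cmat (Real.pi / 4 * (1 + φ)))
        (dec₂ i) (dec₂ j)
    else 0

/-- A state of a walk on the `d`-cycle with two coin/memory registers:
position `ZMod d`, combined coin index `Fin 4`. -/
abbrev WState (d : ℕ) := ZMod d → Fin 4 → ℂ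

/-- Application of the coin flip operator `I_P ⊗ Ĉ(φ)`. -/
def coinOp (d : ℕ) (φ : ℝ) (ψ : WState d) : WState d :=
  fun n => (Chat φ).mulVec (ψ n)

/-- The shift operator: `|n,c₁,↓⟩ ↦ |n-1,c₁,↓⟩`, `|n,c₁,↑⟩ ↦ |n+1,c₁,↑⟩`. -/
def shiftOp (d : ℕ) (ψ : WState d) : WState d :=
  fun n i => if dec₂ i = 0 then ψ (n + 1) i else ψ (n - 1) i

/-- The memory update operator `I_P ⊗ M` swapping the two coin registers. -/
def memOp (d : ℕ) (ψ : WState d) : WState d :=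
  fun n i => ψ n (enc (dec₂ i) (dec₁ i))

/-- One step `U(φ) = (I_P⊗M)·S·(I_P⊗Ĉ(φ))` of the recycled-coin walk. -/
def Urc (d : ℕ) (φ : ℝ) (ψ : WState d) : WState d :=
  memOp d (shiftOp d (coinOp d φ ψ))

/-- The localized initial state `|0⟩ ⊗ v`. -/
def initState (d : ℕ) (v : Fin 4 → ℂ) : WState d :=
  fun n i => if n = 0 then v i else 0

/-- Position probability `p(n,t,φ;ψ₀)` of the recycled-coin walk. -/
def prob (d : ℕ) (φ : ℝ) (ψ₀ : WState d) (n : ZMod d) (t : ℕ) : ℝ :=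
  ∑ i : Fin 4, ‖((Urc d φ)^[t] ψ₀) n i‖ ^ 2

/-- `Q = diag(1,1,1,-1)`. -/
def Qmat : Matrix (Fin 4) (Fin 4) ℂ := Matrix.diagonal ![1, 1, 1, -1]

/-- Fourier-space one-step matrix `M_k(θ)` of the recycled-coin walk. -/
def Mk (d : ℕ) (k : ZMod d) (θ : ℝ) : Matrix (Fin 4) (Fin 4) ℂ :=
  let ω : ℂ := Complex.exp (2 * Real.pi * Complex.I * k.val / d)
  let ωb : ℂ := Complex.exp (-(2 * Real.pi * Complex.I * k.val / d))
  !![ω / Real.sqrt 2, ω / Real.sqrt 2, 0, 0;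
     0, 0, ω * Real.cos θ, ω * Real.sin θ;
     ωb / Real.sqrt 2, -(ωb / Real.sqrt 2), 0, 0;
     0, 0, ωb * Real.sin θ, -(ωb * Real.cos θ)]

/-- Fourier-space one-step matrix `N_k` of the memory walk with Hadamard coin. -/
def Nk (d : ℕ) (k : ZMod d) : Matrix (Fin 4) (Fin 4) ℂ :=
  let ω : ℂ := Complex.exp (2 * Real.pi * Complex.I * k.val / d)
  let ωb : ℂ := Complex.exp (-(2 * Real.pi * Complex.I * k.val / d))
  ((Real.sqrt 2 : ℂ))⁻¹ • !![ω, 0, ω, 0; 0, ωb, 0, ωb; 0, ω, 0, -ω; ωb, 0, -ωb, 0]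

/-- The permutation matrix `P` sending `(α,β,γ,δ)ᵀ` to `(α,γ,δ,β)ᵀ`. -/
def Pmat : Matrix (Fin 4) (Fin 4) ℂ :=
  !![1, 0, 0, 0; 0, 0, 1, 0; 0, 0, 0, 1; 0, 1, 0, 0]

/-- Hermitian inner product on `ℂ⁴`, conjugate linear in the first slot. -/
def cdot (u v : Fin 4 → ℂ) : ℂ := ∑ i : Fin 4, (starRingEnd ℂ) (u i) * v i

/-- Coin flip operator `I_M ⊗ C(π/4)` of the memory walk. -/
def coinMem (d : ℕ) (ψ : WState d) : WState d :=
  fun n => (Matrix.of fun i j =>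
    if dec₁ i = dec₁ j then Cmat (Real.pi / 4) (dec₂ i) (dec₂ j) else 0 :
    Matrix (Fin 4) (Fin 4) ℂ).mulVec (ψ n)

/-- The shift operator `S_𝓜` of the memory walk (registers: memory, coin). -/
def shiftMem (d : ℕ) (ψ : WState d) : WState d :=
  fun n i =>
    if i = (0 : Fin 4) then ψ (n + 1) 0
    else if i = (1 : Fin 4) then ψ (n + 1) 3
    else if i = (2 : Fin 4) then ψ (n - 1) 2
    else ψ (n - 1) 1

/-- One step `U_𝓜 = S_𝓜 · (I_P⊗I_M⊗C(π/4))` of the quantum walk with memory. -/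
def Umem (d : ℕ) (ψ : WState d) : WState d :=
  shiftMem d (coinMem d ψ)

/-- Position probability `p_𝓜(n,t;ψ₀)` of the quantum walk with memory. -/
def probMem (d : ℕ) (ψ₀ : WState d) (n : ZMod d) (t : ℕ) : ℝ :=
  ∑ i : Fin 4, ‖((Umem d)^[t] ψ₀) n i‖ ^ 2

/-- Matrices `M₊(θ)` (statement 9). -/
def Mplus (θ : ℝ) : Matrix (Fin 4) (Fin 4) ℂ :=
  !![1 / Real.sqrt 2, 1 / Real.sqrt 2, 0, 0;
     0, 0, Real.cos θ, Real.sin θ;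
     0, 0, 0, 0;
     0, 0, 0, 0]

/-- Matrices `M₋(θ)` (statement 9). -/
def Mminus (θ : ℝ) : Matrix (Fin 4) (Fin 4) ℂ :=
  !![0, 0, 0, 0;
     0, 0, 0, 0;
     1 / Real.sqrt 2, -(1 / Real.sqrt 2 : ℂ), 0, 0;
     0, 0, Real.sin θ, -(Real.cos θ : ℂ)]

/-- Fourier transform of an amplitude function. -/
def FT (d : ℕ) [NeZero d] (ψ : WState d) (k : ZMod d) : Fin 4 → ℂ :=
  ∑ n : ZMod d, Complex.exp (-(2 * Real.pi * Complex.I * k.val * n.val / d)) • ψ n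


lemma Chat_Q (φ φ' : ℝ) (h : φ + φ' = 6) (x : Fin 4 → ℂ) :
    (Chat φ').mulVec (Qmat.mulVec x) = Qmat.mulVec ((Chat φ).mulVec x) := by
  have e : Real.pi / 4 * (1 + φ') = 2 * Real.pi - Real.pi / 4 * (1 + φ) := by
    rw [← eq_sub_iff_add_eq'] at h
    rw [h]; ring
  have hc : Real.cos (Real.pi / 4 * (1 + φ')) = Real.cos (Real.pi / 4 * (1 + φ)) := by
    rw [e, Real.cos_two_pi_sub]
  have hs : Real.sin (Real.pi / 4 * (1 + φ')) = -Real.sin (Real.pi / 4 * (1 + φ)) := by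
    rw [e, Real.sin_two_pi_sub]
  have d0 : dec₁ 0 = 0 := rfl
  have d1 : dec₁ 1 = 0 := rfl
  have d2 : dec₁ 2 = 1 := rfl
  have d3 : dec₁ 3 = 1 := rfl
  have f0 : dec₂ 0 = 0 := rfl
  have f1 : dec₂ 1 = 1 := rfl
  have f2 : dec₂ 2 = 0 := rfl
  have f3 : dec₂ 3 = 1 := rfl
  funext i
  rw [Qmat, Matrix.mulVec_diagonal]
  simp only [Matrix.mulVec, dotProduct, Fin.sum_univ_four, Matrix.diagonal_apply]
  fin_cases i <;>
    simp [Chat, Cmat, d0, d1, d2, d3, f0, f1, f2, f3, hc, hs, -Complex.ofReal_cos,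
      -Complex.ofReal_sin] <;> ring

lemma Urc_Q (d : ℕ) (φ φ' : ℝ) (h : φ + φ' = 6) (ψ : WState d) :
    Urc d φ' (fun n => Qmat.mulVec (ψ n)) = fun n => Qmat.mulVec (Urc d φ ψ n) := by
  have hq : coinOp d φ' (fun n => Qmat.mulVec (ψ n)) =
      fun n => Qmat.mulVec (coinOp d φ ψ n) := by
    funext n
    exact Chat_Q φ φ' h (ψ n)
  unfold Urc
  rw [hq]
  funext n i
  simp only [memOp, shiftOp, Qmat, Matrix.mulVec_diagonal]
  fin_cases i <;> simp [dec₁, dec₂, enc]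

lemma prob_Q (d : ℕ) (φ φ' : ℝ) (h : φ + φ' = 6) (t : ℕ) (n : ZMod d) (v : Fin 4 → ℂ) :
    prob d φ (initState d v) n t = prob d φ' (initState d (Qmat.mulVec v)) n t := by
  have h0 : initState d (Qmat.mulVec v) = fun n => Qmat.mulVec (initState d v n) := by
    funext n i
    simp only [initState, Qmat, Matrix.mulVec_diagonal]
    split_ifs <;> simp
  have ht : ∀ t : ℕ, (Urc d φ')^[t] (initState d (Qmat.mulVec v)) =
      fun n => Qmat.mulVec ((Urc d φ)^[t] (initState d v) n) := by
    intro t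
    induction t with
    | zero => exact h0
    | succ k ih =>
      rw [Function.iterate_succ_apply', Function.iterate_succ_apply', ih, Urc_Q d φ φ' h]
  unfold prob
  rw [ht]
  refine Finset.sum_congr rfl fun i _ => ?_
  simp only [Qmat, Matrix.mulVec_diagonal]
  fin_cases i <;> simp

/-- the identities relating memory parameters `0↔6`, `2↔4`, `1↔5`
via the matrix `Q = diag(1,1,1,-1)`. -/
theorem statement3 (d : ℕ) (hd : 1 ≤ d) (t : ℕ) (n : ZMod d)
    (v : Fin 4 → ℂ) (hv : ∑ i : Fin 4, ‖v i‖ ^ 2 = 1) :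
    prob d 0 (initState d v) n t = prob d 6 (initState d (Qmat.mulVec v)) n t ∧
    prob d 2 (initState d v) n t = prob d 4 (initState d (Qmat.mulVec v)) n t ∧
    prob d 1 (initState d v) n t = prob d 5 (initState d (Qmat.mulVec v)) n t := by
  exact ⟨prob_Q d 0 6 (by norm_num) t n v, prob_Q d 2 4 (by norm_num) t n v,
    prob_Q d 1 5 (by norm_num) t n v⟩

end
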